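/- arXiv:2206.14054 — 2 statements merged into one kernel-verified Lean document; each statement's English description precedes it below -/
import Mathlib

section
/- For every real number s with -1 < s < 0, the improper integral ∫₀^∞ r^s sin(r) dr converges and equals Γ(1+s) cos(sπ/2). -/
open Real Filter intervalIntegral

lemma ibp_bound (s : ℝ) (hs0 : s < 0) (z : ℂ) (hz : 1 ≤ ‖z‖) (hz0 : 0 ≤ z.re) (R T : ℝ) (hR : 0 < R)
    (hT : R ≤ T) :
    ‖∫ r in R..T, ((r ^ s : ℝ) : ℂ) * Complex.exp (-(z * r))‖ ≤ 2 * R ^ s := by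
  have hzne : z ≠ 0 := by
    rintro rfl
    simp at hz
    linarith
  have hpos : ∀ x ∈ Set.uIcc R T, 0 < x := by
    intro x hx
    rw [Set.uIcc_of_le hT] at hx
    exact hR.trans_le hx.1
  have hd : ∀ x ∈ Set.uIcc R T, HasDerivAt (fun r : ℝ => r ^ s) (s * x ^ (s - 1)) x := by
    intro x hx
    exact Real.hasDerivAt_rpow_const (Or.inl (hpos x hx).ne')
  have hv : ∀ x ∈ Set.uIcc R T,
      HasDerivAt (fun r : ℝ => -Complex.exp (-(z * r)) / z) (Complex.exp (-(z * x))) x := by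
    intro x hx
    have h1 : HasDerivAt (fun r : ℝ => -(z * (r : ℂ))) (-(z * 1)) x :=
      ((Complex.ofRealCLM.hasDerivAt (x := x)).const_mul z).neg
    have h2 := (h1.cexp.neg).div_const z
    have e3 : -(Complex.exp (-(z * x)) * -(z * 1)) / z = Complex.exp (-(z * x)) := by
      field_simp
    exact e3 ▸ h2
  have hderInt : IntervalIntegrable (fun r : ℝ => s * r ^ (s - 1)) MeasureTheory.volume R T := by
    apply ContinuousOn.intervalIntegrable
    intro x hx
    exact ((Real.continuousAt_rpow_const x (s-1) (Or.inl (hpos x hx).ne')).const_mul s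
      |>.continuousWithinAt)
  have hibp := integral_mul_deriv_eq_deriv_mul (a := R) (b := T)
    (u := fun r : ℝ => ((r ^ s : ℝ) : ℂ)) (u' := fun x => ((s * x ^ (s-1) : ℝ) : ℂ))
    (v := fun r : ℝ => -Complex.exp (-(z * r)) / z) (v' := fun x : ℝ => Complex.exp (-(z * x)))
    (fun x hx => (hd x hx).ofReal_comp) hv ⟨hderInt.1.ofReal, hderInt.2.ofReal⟩
    (Continuous.intervalIntegrable (by fun_prop) _ _)
  have hvb : ∀ r : ℝ, 0 < r → ‖-Complex.exp (-(z * r)) / z‖ ≤ 1 := by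
    intro r hr
    rw [norm_div, norm_neg, Complex.norm_exp]
    apply div_le_one_of_le₀ _ (norm_nonneg _)
    refine le_trans ?_ hz
    rw [Real.exp_le_one_iff]
    simp
    positivity
  have hI : ‖∫ x in R..T, ((s * x ^ (s-1) : ℝ) : ℂ) * (-Complex.exp (-(z * x)) / z)‖
      ≤ R ^ s - T ^ s := by
    have e : ∫ x in R..T, -(s * x ^ (s-1)) = R ^ s - T ^ s := by
      rw [intervalIntegral.integral_neg, integral_eq_sub_of_hasDerivAt hd hderInt]
      ring
    rw [← e]
    apply intervalIntegral.norm_integral_le_of_norm_le hT _ hderInt.neg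
    refine Filter.Eventually.of_forall fun x hx => ?_
    have hx0 : 0 < x := hR.trans hx.1
    rw [norm_mul, Complex.norm_real, Real.norm_eq_abs, abs_mul, abs_of_neg hs0,
      abs_of_pos (Real.rpow_pos_of_pos hx0 _)]
    have h3 : 0 ≤ -s * x ^ (s - 1) :=
      mul_nonneg (by linarith) (Real.rpow_pos_of_pos hx0 _).le
    calc _ ≤ -s * x ^ (s-1) * 1 := mul_le_mul_of_nonneg_left (hvb x hx0) h3
      _ = _ := by simp
  have hb : ∀ r : ℝ, 0 < r → ‖((r ^ s : ℝ) : ℂ) * (-Complex.exp (-(z * r)) / z)‖ ≤ r ^ s := by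
    intro r hr
    rw [norm_mul, Complex.norm_real, Real.norm_eq_abs, abs_of_pos (Real.rpow_pos_of_pos hr _)]
    exact mul_le_of_le_one_right (Real.rpow_pos_of_pos hr _).le (hvb r hr)
  rw [hibp]
  have h1 := hb R hR
  have h2 := hb T (hR.trans_le hT)
  refine (norm_sub_le _ _).trans ?_
  have := norm_sub_le (((T ^ s : ℝ) : ℂ) * (-Complex.exp (-(z * T)) / z))
    (((R ^ s : ℝ) : ℂ) * (-Complex.exp (-(z * R)) / z))
  linarith

lemma damped_integrable (s : ℝ) (hs1 : -1 < s) (z : ℂ) (hz0 : 0 < z.re) :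
    MeasureTheory.IntegrableOn (fun r : ℝ => ((r ^ s : ℝ) : ℂ) * Complex.exp (-(z * r)))
      (Set.Ioi 0) := by
  have h2 := integrableOn_rpow_mul_exp_neg_mul_rpow (s := s) (p := 1) hs1 one_pos hz0
  refine MeasureTheory.Integrable.mono h2 ?_ ?_
  · apply Measurable.aestronglyMeasurable
    fun_prop
  · refine Filter.Eventually.of_forall fun x => ?_
    rw [norm_mul, norm_mul, Complex.norm_real, Complex.norm_exp, Real.norm_eq_abs (Real.exp _),
      abs_of_pos (Real.exp_pos _)]
    simp

lemma damped_differentiable (s : ℝ) (hs1 : -1 < s) (z : ℂ) (hz0 : 0 < z.re) :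
    DifferentiableAt ℂ (fun z : ℂ => ∫ r in Set.Ioi (0:ℝ),
      ((r ^ s : ℝ) : ℂ) * Complex.exp (-(z * r))) z := by
  have hmem : {w : ℂ | z.re / 2 < w.re} ∈ nhds z :=
    (isOpen_lt continuous_const Complex.continuous_re).mem_nhds (by simp; linarith)
  have hb := integrableOn_rpow_mul_exp_neg_mul_rpow (s := s + 1) (p := 1) (b := z.re / 2)
    (by linarith) one_pos (by linarith)
  refine (hasDerivAt_integral_of_dominated_loc_of_deriv_le
    (μ := MeasureTheory.volume.restrict (Set.Ioi (0:ℝ)))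
    (F := fun (z : ℂ) (r : ℝ) => ((r ^ s : ℝ) : ℂ) * Complex.exp (-(z * r)))
    (F' := fun (z : ℂ) (r : ℝ) => ((r ^ s : ℝ) : ℂ) * (Complex.exp (-(z * r)) * (-(1 * r))))
    hmem ?_ (damped_integrable s hs1 z hz0) ?_ ?_ hb ?_).2.differentiableAt
  · refine Filter.Eventually.of_forall fun w => ?_
    apply Measurable.aestronglyMeasurable
    fun_prop
  · apply Measurable.aestronglyMeasurable
    fun_prop
  · refine (MeasureTheory.ae_restrict_iff' measurableSet_Ioi).2
      (Filter.Eventually.of_forall fun r hr w hw => ?_)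
    have hr0 : 0 < r := hr
    have hw' : z.re / 2 < w.re := hw
    rw [norm_mul, norm_mul, Complex.norm_real, Complex.norm_exp, Real.norm_eq_abs,
      abs_of_pos (Real.rpow_pos_of_pos hr0 _), one_mul, norm_neg, Complex.norm_real,
      Real.norm_eq_abs, abs_of_pos hr0, Real.rpow_add hr0, Real.rpow_one, mul_assoc, mul_comm r]
    have : (-(w * (r:ℂ))).re ≤ -(z.re / 2) * r := by
      simp
      nlinarith
    gcongr
  · refine Filter.Eventually.of_forall fun r w hw => ?_
    exact ((((hasDerivAt_id w).mul_const (r : ℂ)).neg).cexp).const_mul _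

lemma damped_value (s : ℝ) (hs1 : -1 < s) (z : ℂ) (hz0 : 0 < z.re) :
    ∫ r in Set.Ioi (0:ℝ), ((r ^ s : ℝ) : ℂ) * Complex.exp (-(z * r)) =
      (1 / z) ^ ((1 + s : ℝ) : ℂ) * Complex.Gamma ((1 + s : ℝ) : ℂ) := by
  have hopen : IsOpen {w : ℂ | 0 < w.re} := isOpen_lt continuous_const Complex.continuous_re
  have hf : AnalyticOnNhd ℂ (fun z : ℂ => ∫ r in Set.Ioi (0:ℝ),
      ((r ^ s : ℝ) : ℂ) * Complex.exp (-(z * r))) {w : ℂ | 0 < w.re} :=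
    DifferentiableOn.analyticOnNhd
      (fun w hw => (damped_differentiable s hs1 w hw).differentiableWithinAt) hopen
  have hg : AnalyticOnNhd ℂ (fun z : ℂ =>
      (1 / z) ^ ((1 + s : ℝ) : ℂ) * Complex.Gamma ((1 + s : ℝ) : ℂ)) {w : ℂ | 0 < w.re} := by
    refine DifferentiableOn.analyticOnNhd (fun w hw => ?_) hopen
    have hw' : 0 < w.re := hw
    have hw0 : w ≠ 0 := by
      rintro rfl
      simp at hw'
    refine DifferentiableAt.differentiableWithinAt ?_
    refine DifferentiableAt.mul_const ?_ _
    refine DifferentiableAt.cpow ?_ (differentiableAt_const _) ?_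
    · exact (differentiableAt_const _).div differentiableAt_id hw0
    · left
      rw [one_div, Complex.inv_re]
      exact div_pos hw' (Complex.normSq_pos.2 hw0)
  have hU : IsPreconnected {w : ℂ | 0 < w.re} := (convex_halfSpace_re_gt 0).isPreconnected
  have hto : Tendsto (fun x : ℝ => (x : ℂ)) (nhdsWithin 1 {1}ᶜ) (nhdsWithin ((1 : ℝ) : ℂ) {((1 : ℝ) : ℂ)}ᶜ) := by
    refine tendsto_nhdsWithin_iff.2 ⟨?_, ?_⟩
    · exact (Complex.continuous_ofReal.tendsto 1).mono_left nhdsWithin_le_nhds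
    · filter_upwards [self_mem_nhdsWithin] with x hx h
      exact hx (Complex.ofReal_injective h)
  refine hf.eqOn_of_preconnected_of_frequently_eq hg hU (z₀ := ((1 : ℝ) : ℂ)) (by simp) ?_ hz0
  refine hto.frequently (Filter.Eventually.frequently ?_)
  filter_upwards [mem_nhdsWithin_of_mem_nhds (lt_mem_nhds one_pos)] with x hx
  rw [← Complex.integral_cpow_mul_exp_neg_mul_Ioi (a := ((1 + s : ℝ) : ℂ)) (r := x)
    (by rw [Complex.ofReal_re]; linarith) hx]
  apply MeasureTheory.setIntegral_congr_fun measurableSet_Ioi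
  intro t ht
  simp only
  rw [Complex.ofReal_cpow (le_of_lt ht)]
  congr 2
  push_cast; ring

lemma full_integral (s : ℝ) (hs1 : -1 < s) (z : ℂ) (hz0 : 0 < z.re) :
    Tendsto (fun T : ℝ => ∫ r in (0:ℝ)..T, ((r ^ s : ℝ) : ℂ) * Complex.exp (-(z * r))) atTop
      (nhds ((1 / z) ^ ((1 + s : ℝ) : ℂ) * Complex.Gamma ((1 + s : ℝ) : ℂ))) := by
  rw [← damped_value s hs1 z hz0]
  exact MeasureTheory.intervalIntegral_tendsto_integral_Ioi _ (damped_integrable s hs1 z hz0)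
    tendsto_id

theorem improper_integral_rpow_sin (s : ℝ) (hs1 : -1 < s) (hs0 : s < 0) :
    Tendsto (fun R : ℝ => ∫ r in (0:ℝ)..R, r ^ s * Real.sin r) atTop
      (nhds (Real.Gamma (1 + s) * Real.cos (s * π / 2))) := by
  have hsi : ∀ a b : ℝ, IntervalIntegrable (fun r : ℝ => r ^ s) MeasureTheory.volume a b :=
    fun a b => intervalIntegrable_rpow' hs1
  have hsi' : ∀ a b : ℝ, IntervalIntegrable (fun r : ℝ => ((r ^ s : ℝ) : ℂ))
      MeasureTheory.volume a b :=
    fun a b => ⟨(hsi a b).1.ofReal, (hsi a b).2.ofReal⟩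
  have hii : ∀ (z : ℂ) (a b : ℝ), IntervalIntegrable
      (fun r : ℝ => ((r ^ s : ℝ) : ℂ) * Complex.exp (-(z * r))) MeasureTheory.volume a b :=
    fun z a b => (hsi' a b).mul_continuousOn (by fun_prop)
  -- bound for positive damping
  have hA : ∀ (ε : ℝ), 0 < ε → ∀ R : ℝ, 0 < R →
      ‖(1 / ((ε : ℂ) - Complex.I)) ^ ((1 + s : ℝ) : ℂ) * Complex.Gamma ((1 + s : ℝ) : ℂ) -
        ∫ r in (0:ℝ)..R, ((r ^ s : ℝ) : ℂ) * Complex.exp (-(((ε : ℂ) - Complex.I) * r))‖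
        ≤ 2 * R ^ s := by
    intro ε hε R hR
    have hz : 1 ≤ ‖(ε : ℂ) - Complex.I‖ := by
      have := Complex.abs_im_le_norm ((ε : ℂ) - Complex.I)
      simpa using this
    have ht := (full_integral s hs1 ((ε : ℂ) - Complex.I) (by simpa using hε)).sub_const
      (∫ r in (0:ℝ)..R, ((r ^ s : ℝ) : ℂ) * Complex.exp (-(((ε : ℂ) - Complex.I) * r)))
    refine le_of_tendsto ht.norm ?_
    filter_upwards [eventually_ge_atTop R] with T hT
    rw [integral_interval_sub_left (hii _ _ _) (hii _ _ _)]
    exact ibp_bound s hs0 _ hz (by simpa using hε.le) R T hR hT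
  have hB : ∀ R : ℝ, 0 < R →
      ‖Complex.I ^ ((1 + s : ℝ) : ℂ) * Complex.Gamma ((1 + s : ℝ) : ℂ) -
        ∫ r in (0:ℝ)..R, ((r ^ s : ℝ) : ℂ) * Complex.exp (Complex.I * r)‖
        ≤ 2 * R ^ s := by
    intro R hR
    have hc1 : Tendsto (fun ε : ℝ => (1 / ((ε : ℂ) - Complex.I)) ^ ((1 + s : ℝ) : ℂ))
        (nhdsWithin 0 (Set.Ioi 0)) (nhds (Complex.I ^ ((1 + s : ℝ) : ℂ))) := by
      have hc : ContinuousAt (fun ε : ℝ => (1 / ((ε : ℂ) - Complex.I)) ^ ((1 + s : ℝ) : ℂ)) 0 := by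
        refine ContinuousAt.cpow ?_ continuousAt_const ?_
        · refine ContinuousAt.div continuousAt_const (by fun_prop) (by simp)
        · simp [Complex.mem_slitPlane_iff]
      have := hc.tendsto
      simp only [Complex.ofReal_zero, zero_sub, one_div, inv_neg, Complex.inv_I, neg_neg] at this
      simpa only [one_div] using this.mono_left nhdsWithin_le_nhds
    have hc2 : Tendsto (fun ε : ℝ => ∫ r in (0:ℝ)..R,
          ((r ^ s : ℝ) : ℂ) * Complex.exp (-(((ε : ℂ) - Complex.I) * r)))
        (nhdsWithin 0 (Set.Ioi 0))
        (nhds (∫ r in (0:ℝ)..R, ((r ^ s : ℝ) : ℂ) * Complex.exp (Complex.I * r))) := by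
      refine intervalIntegral.tendsto_integral_filter_of_dominated_convergence (fun r => r ^ s)
        ?_ ?_ (hsi _ _) ?_
      · refine Filter.Eventually.of_forall fun ε => ?_
        apply Measurable.aestronglyMeasurable
        fun_prop
      · filter_upwards [self_mem_nhdsWithin] with ε hε
        refine Filter.Eventually.of_forall fun r hr => ?_
        rw [Set.uIoc_of_le hR.le] at hr
        have hr0 : 0 < r := hr.1
        have hε' : 0 < ε := hε
        rw [norm_mul, Complex.norm_real, Real.norm_eq_abs,
          abs_of_pos (Real.rpow_pos_of_pos hr0 _), Complex.norm_exp]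
        apply mul_le_of_le_one_right (Real.rpow_pos_of_pos hr0 _).le
        rw [Real.exp_le_one_iff]
        simp
        positivity
      · refine Filter.Eventually.of_forall fun r hr => ?_
        have hc : Continuous (fun ε : ℝ =>
          ((r ^ s : ℝ) : ℂ) * Complex.exp (-(((ε : ℂ) - Complex.I) * r))) := by fun_prop
        have := (hc.tendsto 0).mono_left (nhdsWithin_le_nhds (s := Set.Ioi 0))
        simpa using this
    refine le_of_tendsto ((hc1.mul_const _).sub hc2).norm ?_
    filter_upwards [self_mem_nhdsWithin] with ε hε
    exact hA ε hε R hR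
  have him : ∀ R : ℝ, (∫ r in (0:ℝ)..R, ((r ^ s : ℝ) : ℂ) * Complex.exp (Complex.I * r)).im
      = ∫ r in (0:ℝ)..R, r ^ s * Real.sin r := by
    intro R
    have hi : IntervalIntegrable
      (fun r : ℝ => ((r ^ s : ℝ) : ℂ) * Complex.exp (Complex.I * r)) MeasureTheory.volume 0 R :=
      (hsi' 0 R).mul_continuousOn (by fun_prop)
    have := Complex.imCLM.intervalIntegral_comp_comm hi
    rw [Complex.imCLM_apply] at this
    rw [← this]
    congr 1
    ext r
    rw [Complex.imCLM_apply, Complex.im_ofReal_mul, mul_comm Complex.I, Complex.exp_ofReal_mul_I_im]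
  have hval : (Complex.I ^ ((1 + s : ℝ) : ℂ) * Complex.Gamma ((1 + s : ℝ) : ℂ)).im
      = Real.Gamma (1 + s) * Real.cos (s * π / 2) := by
    rw [Complex.Gamma_ofReal, mul_comm, Complex.im_ofReal_mul,
      Complex.cpow_def_of_ne_zero Complex.I_ne_zero, Complex.log_I]
    have : (π : ℂ) / 2 * Complex.I * ((1 + s : ℝ) : ℂ)
        = ((s * π / 2 + π / 2 : ℝ) : ℂ) * Complex.I := by
      push_cast; ring
    rw [this, Complex.exp_ofReal_mul_I_im, Real.sin_add_pi_div_two]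
  have hlim : Tendsto (fun R : ℝ => 2 * R ^ s) atTop (nhds 0) := by
    have := (tendsto_rpow_neg_atTop (y := -s) (by linarith)).const_mul 2
    simpa using this
  rw [tendsto_iff_norm_sub_tendsto_zero]
  refine squeeze_zero' (Filter.Eventually.of_forall fun R => norm_nonneg _) ?_ hlim
  filter_upwards [eventually_gt_atTop 0] with R hR
  rw [← him, ← hval, ← Complex.sub_im, Real.norm_eq_abs]
  refine (Complex.abs_im_le_norm _).trans ?_
  rw [norm_sub_rev]
  exact hB R hR
end

section
/- Let 0 < s < 1 and let 𝒞_s = 2cos(sπ/2)/(s(s+1)π). The probability density ρ₁(x) = C₁ (R₁² − x²)_+^{(1+s)/2} on ℝ, with R₁ = (𝒞_s β(1/2,(3+s)/2))^{-1/(s+2)} and C₁ a normalizing constant, generates a potential satisfying: ((|·|^{-s} + |·|²) * ρ₁)(y) is constant for y ∈ [−R₁, R₁] and strictly larger than that constant for |y| > R₁. -/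
open Real MeasureTheory

theorem beta_int {m n : ℝ} (hm : 0 < m) (hn : 0 < n) :
    IntegrableOn (fun x : ℝ => x ^ (m-1) * (1-x) ^ (n-1)) (Set.Ioo 0 1) ∧
    ∫ x in Set.Ioo (0:ℝ) 1, x ^ (m-1) * (1-x) ^ (n-1) = Gamma m * Gamma n / Gamma (m+n) := by
  have h := ProbabilityTheory.lintegral_betaPDF_eq_one hm hn
  rw [ProbabilityTheory.lintegral_betaPDF] at h
  have hb := ProbabilityTheory.beta_pos hm hn
  have hpos : ∀ x ∈ Set.Ioo (0:ℝ) 1, 0 ≤ 1 / ProbabilityTheory.beta m n * x ^ (m-1) * (1-x) ^ (n-1) := by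
    intro x hx
    have h1 := Real.rpow_nonneg hx.1.le (m-1)
    have h2 := Real.rpow_nonneg (sub_nonneg.2 hx.2.le) (n-1)
    positivity
  have hae : 0 ≤ᵐ[volume.restrict (Set.Ioo (0:ℝ) 1)]
      fun x => 1 / ProbabilityTheory.beta m n * x ^ (m-1) * (1-x) ^ (n-1) :=
    (ae_restrict_iff' measurableSet_Ioo).2 (Filter.Eventually.of_forall hpos)
  have hmeas : Measurable (fun x : ℝ => 1 / ProbabilityTheory.beta m n * x ^ (m-1) * (1-x) ^ (n-1)) := by
    fun_prop
  have hint : IntegrableOn (fun x : ℝ => 1 / ProbabilityTheory.beta m n * x ^ (m-1) * (1-x) ^ (n-1))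
      (Set.Ioo 0 1) := by
    refine ⟨hmeas.aestronglyMeasurable, ?_⟩
    rw [hasFiniteIntegral_iff_ofReal hae, h]
    exact ENNReal.one_lt_top
  have hval : ∫ x in Set.Ioo (0:ℝ) 1, 1 / ProbabilityTheory.beta m n * x ^ (m-1) * (1-x) ^ (n-1) = 1 := by
    rw [integral_eq_lintegral_of_nonneg_ae hae hmeas.aestronglyMeasurable, h]; simp
  constructor
  · have := hint.const_mul (ProbabilityTheory.beta m n)
    refine this.congr (Filter.Eventually.of_forall fun x => ?_)
    simp only; field_simp
  · have : ∫ x in Set.Ioo (0:ℝ) 1, ProbabilityTheory.beta m n * (1 / ProbabilityTheory.beta m n * x ^ (m-1) * (1-x) ^ (n-1)) = ProbabilityTheory.beta m n := by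
      rw [integral_const_mul, hval, mul_one]
    rw [← ProbabilityTheory.beta, ← this]
    congr 1; ext x; field_simp; 

/-- shift `x = 2p-1`. -/
theorem beta_shift {m n : ℝ} (hm : 0 < m) (hn : 0 < n) :
    IntegrableOn (fun x : ℝ => (1+x) ^ (m-1) * (1-x) ^ (n-1)) (Set.Ioo (-1) 1) ∧
    ∫ x in Set.Ioo (-1:ℝ) 1, (1+x) ^ (m-1) * (1-x) ^ (n-1) = 
      2 ^ (m+n-1) * (Gamma m * Gamma n / Gamma (m+n)) := by
  have him : (fun p : ℝ => 2 * p - 1) '' Set.Ioo 0 1 = Set.Ioo (-1) 1 := by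
    ext x
    constructor
    · rintro ⟨p, ⟨h1, h2⟩, rfl⟩; constructor <;> simp only <;> linarith
    · rintro ⟨h1, h2⟩; exact ⟨(x+1)/2, ⟨by linarith, by linarith⟩, by ring⟩
  have hd : ∀ p ∈ Set.Ioo (0:ℝ) 1, HasDerivWithinAt (fun p : ℝ => 2 * p - 1) 2 (Set.Ioo 0 1) p := by
    intro p _
    simpa using (((hasDerivAt_id p).const_mul 2).sub_const 1).hasDerivWithinAt
  have hi : Set.InjOn (fun p : ℝ => 2 * p - 1) (Set.Ioo 0 1) := by
    intro a _ b _ h; simp only at h; linarith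
  have heq : Set.EqOn (fun p : ℝ => |(2:ℝ)| • ((1+(2*p-1)) ^ (m-1) * (1-(2*p-1)) ^ (n-1)))
     (fun p => 2 ^ (m+n-1) * (p ^ (m-1) * (1-p) ^ (n-1))) (Set.Ioo 0 1) := by
    intro p hp
    have h1 : 1 + (2*p-1) = 2*p := by ring
    have h2 : 1 - (2*p-1) = 2*(1-p) := by ring
    have h3 : (2:ℝ) ^ (m+n-1) = 2 * 2^(m-1) * 2^(n-1) := by
      rw [show m+n-1 = 1 + (m-1) + (n-1) by ring, rpow_add two_pos, rpow_add two_pos, rpow_one]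
    simp only [smul_eq_mul]
    rw [h1, h2, h3, mul_rpow two_pos.le hp.1.le, mul_rpow two_pos.le (by linarith [hp.2]), abs_two]
    ring
  obtain ⟨b1, b2⟩ := beta_int hm hn
  constructor
  · rw [← him, integrableOn_image_iff_integrableOn_abs_deriv_smul measurableSet_Ioo hd hi,
      integrableOn_congr_fun heq measurableSet_Ioo]
    exact b1.const_mul _
  · rw [← him, integral_image_eq_integral_abs_deriv_smul measurableSet_Ioo hd hi,
      setIntegral_congr_fun measurableSet_Ioo heq, integral_const_mul, b2]

/-- half line form -/
theorem beta_half {m n : ℝ} (hm : 0 < m) (hn : 0 < n) :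
    IntegrableOn (fun t : ℝ => t ^ (2*m-1) * (1+t^2) ^ (-(m+n))) (Set.Ioi 0) ∧
    ∫ t in Set.Ioi (0:ℝ), t ^ (2*m-1) * (1+t^2) ^ (-(m+n)) = 
      (Gamma m * Gamma n / Gamma (m+n)) / 2 := by
  have him : (fun t : ℝ => t^2/(1+t^2)) '' Set.Ioi 0 = Set.Ioo 0 1 := by
    ext x
    constructor
    · rintro ⟨p, hp, rfl⟩
      have hp : 0 < p := hp
      refine ⟨by positivity, ?_⟩
      simp only
      rw [div_lt_one (by positivity)]; linarith
    · rintro ⟨h1, h2⟩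
      have h3 : 0 < 1 - x := by linarith
      refine ⟨sqrt (x/(1-x)), sqrt_pos.2 (by positivity), ?_⟩
      simp only
      rw [sq_sqrt (by positivity)]
      field_simp
      ring
  have hd : ∀ t ∈ Set.Ioi (0:ℝ), HasDerivWithinAt (fun t : ℝ => t^2/(1+t^2)) (2*t/(1+t^2)^2) (Set.Ioi 0) t := by
    intro t ht
    have h0 : (1 + t^2) ≠ 0 := by positivity
    have := ((hasDerivAt_pow 2 t).div ((hasDerivAt_pow 2 t).const_add 1) h0).hasDerivWithinAt (s := Set.Ioi 0)
    refine this.congr_deriv ?_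
    push_cast
    field_simp
    ring
  have hi : Set.InjOn (fun t : ℝ => t^2/(1+t^2)) (Set.Ioi 0) := by
    intro a ha b hb h
    have ha : 0 < a := ha
    have hb : 0 < b := hb
    simp only at h
    rw [div_eq_div_iff (by positivity) (by positivity)] at h
    have : a^2 = b^2 := by linarith
    exact (pow_left_inj₀ ha.le hb.le two_ne_zero).1 this
  have heq : Set.EqOn (fun t : ℝ => |2*t/(1+t^2)^2| • ((t^2/(1+t^2)) ^ (m-1) * (1-t^2/(1+t^2)) ^ (n-1)))
     (fun t => 2 * (t ^ (2*m-1) * (1+t^2) ^ (-(m+n)))) (Set.Ioi 0) := by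
    intro t ht
    have ht : 0 < t := ht
    have h0 : 0 < 1 + t^2 := by positivity
    have h1 : 1 - t^2/(1+t^2) = (1+t^2)⁻¹ := by field_simp; ring
    simp only [smul_eq_mul]
    rw [h1, abs_of_pos (by positivity), div_rpow (by positivity) h0.le, inv_rpow h0.le,
      show -(m+n) = -2 - (m-1) - (n-1) by ring, rpow_sub h0 (-2 - (m-1)), rpow_sub h0 (-2),
      rpow_neg h0.le 2, show 2*m-1 = 1 + 2*(m-1) by ring, rpow_add ht, rpow_one, rpow_mul ht.le]
    norm_cast
    field_simp
  obtain ⟨b1, b2⟩ := beta_int hm hn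
  rw [← him, integral_image_eq_integral_abs_deriv_smul measurableSet_Ioi hd hi,
      setIntegral_congr_fun measurableSet_Ioi heq, integral_const_mul] at b2
  rw [← him, integrableOn_image_iff_integrableOn_abs_deriv_smul measurableSet_Ioi hd hi,
      integrableOn_congr_fun heq measurableSet_Ioi] at b1
  constructor
  · have := b1.const_mul (1/2)
    refine this.congr (Filter.Eventually.of_forall fun x => ?_)
    simp only; ring
  · linarith

theorem beta_sq {n : ℝ} (hn : 0 < n) :
    ∫ x in Set.Ioo (-1:ℝ) 1, (1-x^2) ^ (n-1) = (Gamma (1/2) * Gamma n / Gamma (1/2+n)) := by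
  have him : (fun t : ℝ => t^2) '' Set.Ioo 0 1 = Set.Ioo 0 1 := by
    ext x
    constructor
    · rintro ⟨p, ⟨hp, hp'⟩, rfl⟩
      exact ⟨by positivity, by simp only; nlinarith⟩
    · rintro ⟨h1, h2⟩
      exact ⟨sqrt x, ⟨sqrt_pos.2 h1, by rw [sqrt_lt' one_pos]; simpa⟩, sq_sqrt h1.le⟩
  have hd : ∀ t ∈ Set.Ioo (0:ℝ) 1, HasDerivWithinAt (fun t : ℝ => t^2) (2*t) (Set.Ioo 0 1) t := by
    intro t ht
    simpa using (hasDerivAt_pow 2 t).hasDerivWithinAt (s := Set.Ioo 0 1)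
  have hi : Set.InjOn (fun t : ℝ => t^2) (Set.Ioo 0 1) := by
    intro a ha b hb h
    exact (pow_left_inj₀ ha.1.le hb.1.le two_ne_zero).1 h
  have heq : Set.EqOn (fun t : ℝ => |2*t| • ((t^2) ^ ((1/2:ℝ)-1) * (1-t^2) ^ (n-1)))
     (fun t => 2 * ((1-t^2) ^ (n-1))) (Set.Ioo 0 1) := by
    intro t ht
    have ht0 : 0 < t := ht.1
    have : (t^2) ^ ((1/2:ℝ)-1) = t⁻¹ := by
      rw [← rpow_natCast, ← rpow_mul ht0.le, ← rpow_neg_one]; norm_num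
    simp only [smul_eq_mul]
    rw [abs_of_pos (by positivity), this]
    field_simp
  obtain ⟨b1, b2⟩ := beta_int (m := 1/2) (by norm_num) hn
  rw [← him, integral_image_eq_integral_abs_deriv_smul measurableSet_Ioo hd hi,
      setIntegral_congr_fun measurableSet_Ioo heq, integral_const_mul] at b2
  rw [← b2]
  have e1 := integral_comp_abs (f := (Set.Ioo (-1:ℝ) 1).indicator (fun x => (1-x^2)^(n-1)))
  have e2 : (fun x : ℝ => (Set.Ioo (-1:ℝ) 1).indicator (fun x => (1-x^2)^(n-1)) |x|) =
     (Set.Ioo (-1:ℝ) 1).indicator (fun x => (1-x^2)^(n-1)) := by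
    ext x
    by_cases hx : x ∈ Set.Ioo (-1:ℝ) 1
    · have : |x| ∈ Set.Ioo (-1:ℝ) 1 := ⟨by linarith [abs_nonneg x], abs_lt.2 hx⟩
      rw [Set.indicator_of_mem hx, Set.indicator_of_mem this, sq_abs]
    · have : |x| ∉ Set.Ioo (-1:ℝ) 1 := fun h => hx (abs_lt.1 h.2)
      rw [Set.indicator_of_notMem hx, Set.indicator_of_notMem this]
  rw [e2, integral_indicator measurableSet_Ioo, setIntegral_indicator measurableSet_Ioo] at e1
  rw [e1]
  congr 3
  ext x; simp only [Set.mem_inter_iff, Set.mem_Ioi, Set.mem_Ioo]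
  constructor
  · rintro ⟨h1, h2, h3⟩; exact ⟨h1, h3⟩
  · rintro ⟨h1, h2⟩; exact ⟨h1, by linarith, h2⟩

noncomputable def GG (y t : ℝ) : ℝ :=
  (sqrt (1 - y^2 + t^2) - y*t)^3 / (sqrt (1 - y^2 + t^2) * (1+t^2)^3)

theorem GG_pos_aux {y : ℝ} (hy : |y| < 1) (t : ℝ) :
    0 < 1 - y^2 + t^2 ∧ 0 < sqrt (1 - y^2 + t^2) - y*t := by
  have h1 : y^2 < 1 := by rw [← sq_abs]; nlinarith [abs_nonneg y]
  have h2 : 0 < 1 - y^2 + t^2 := by nlinarith [sq_nonneg t]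
  refine ⟨h2, ?_⟩
  rw [sub_pos]
  apply lt_sqrt_of_sq_lt
  nlinarith [sq_nonneg t]

theorem GG_nonneg {y : ℝ} (hy : |y| < 1) (t : ℝ) : 0 ≤ GG y t := by
  have ⟨h1, h2⟩ := GG_pos_aux hy t
  unfold GG; positivity

theorem GG_sum {y : ℝ} (hy : |y| < 1) (t : ℝ) :
    GG y t + GG y (-t) = 2 * ((1-y^2) + (1+3*y^2) * t^2) / (1+t^2)^3 := by
  have ⟨h1, h2⟩ := GG_pos_aux hy t
  have hq := sqrt_pos.2 h1
  have hq2 := sq_sqrt h1.le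
  unfold GG
  rw [neg_sq]
  set q := sqrt (1 - y^2 + t^2)
  rw [← add_div, div_eq_div_iff (by positivity) (by positivity)]
  have : (q - y*t)^3 + (q - y * -t)^3 = q * (2 * ((1-y^2) + (1+3*y^2) * t^2)) := by
    have : q * q = 1 - y^2+t^2 := by nlinarith
    linear_combination 2 * q * hq2
  rw [this]; ring

theorem inside_cov {s y : ℝ} (hy : |y| < 1) :
    (IntegrableOn (fun x : ℝ => |y-x|^(-s) * (1-x^2)^((1+s)/2)) (Set.Ioo (-1) 1) ↔
      Integrable (fun t : ℝ => |t|^(-s) * GG y t)) ∧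
    ∫ x in Set.Ioo (-1:ℝ) 1, |y-x|^(-s) * (1-x^2)^((1+s)/2) = ∫ t : ℝ, |t|^(-s) * GG y t := by
  have hy2 : y^2 < 1 := by rw [← sq_abs]; nlinarith [abs_nonneg y]
  obtain ⟨hy3, hy4⟩ := abs_lt.1 hy
  have hx2 : ∀ x ∈ Set.Ioo (-1:ℝ) 1, 0 < 1 - x^2 := by
    rintro x ⟨h1, h2⟩; nlinarith
  have hxy : ∀ x ∈ Set.Ioo (-1:ℝ) 1, 0 < 1 - x*y := by
    rintro x ⟨h1, h2⟩; nlinarith [hx2 x ⟨h1, h2⟩, sq_nonneg (x-y)]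
  have him : (fun x : ℝ => (x-y)/sqrt (1-x^2)) '' Set.Ioo (-1) 1 = Set.univ := by
    apply Set.eq_univ_of_forall
    intro t
    have ⟨h1, h2⟩ := GG_pos_aux hy t
    have hq := sqrt_pos.2 h1
    have hq2 := sq_sqrt h1.le
    set q := sqrt (1 - y^2 + t^2)
    have ht : 0 < 1 + t^2 := by positivity
    have e : 1 - ((y + t*q)/(1+t^2))^2 = ((q-y*t)/(1+t^2))^2 := by
      field_simp
      linear_combination (-(1+t^2)) * hq2
    refine ⟨(y + t*q)/(1+t^2), ?_, ?_⟩
    · have : ((y + t*q)/(1+t^2))^2 < 1 := by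
        have : 0 < ((q-y*t)/(1+t^2))^2 := by positivity
        linarith
      exact abs_lt.1 ((sq_lt_one_iff_abs_lt_one _).1 this)
    · simp only
      rw [e, sqrt_sq (by positivity)]
      field_simp
      ring
  have hd : ∀ x ∈ Set.Ioo (-1:ℝ) 1, HasDerivWithinAt (fun x : ℝ => (x-y)/sqrt (1-x^2))
      ((1-x*y)/(sqrt (1-x^2))^3) (Set.Ioo (-1) 1) x := by
    intro x hx
    have h0 := hx2 x hx
    have hr := sqrt_pos.2 h0
    have hr2 := sq_sqrt h0.le
    have h1 := ((hasDerivAt_pow 2 x).const_sub 1).sqrt h0.ne'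
    have h2 := (((hasDerivAt_id x).sub_const y).div h1 hr.ne').hasDerivWithinAt (s := Set.Ioo (-1) 1)
    refine h2.congr_deriv ?_
    simp only [id]
    set r := sqrt (1-x^2)
    push_cast
    field_simp
    linear_combination hr2
  have hi : Set.InjOn (fun x : ℝ => (x-y)/sqrt (1-x^2)) (Set.Ioo (-1) 1) := by
    apply StrictMonoOn.injOn
    apply strictMonoOn_of_deriv_pos (convex_Ioo _ _)
    · intro x hx; exact (hd x hx).continuousWithinAt
    · intro x hx
      rw [interior_Ioo] at hx
      rw [((hd x hx).hasDerivAt (Ioo_mem_nhds hx.1 hx.2)).deriv]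
      have := hxy x hx
      have := sqrt_pos.2 (hx2 x hx)
      positivity
  have heq : Set.EqOn (fun x : ℝ => |(1-x*y)/(sqrt (1-x^2))^3| • (|(x-y)/sqrt (1-x^2)|^(-s) * GG y ((x-y)/sqrt (1-x^2))))
     (fun x => |y-x|^(-s) * (1-x^2)^((1+s)/2)) (Set.Ioo (-1) 1) := by
    intro x hx
    have h0 := hx2 x hx
    have h1 := hxy x hx
    have hr := sqrt_pos.2 h0
    have hr2 := sq_sqrt h0.le
    have e1 : (1-x^2)^((1+s)/2) = sqrt (1-x^2) * sqrt (1-x^2) ^ s := by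
      conv_lhs => rw [← hr2]
      rw [← rpow_natCast, ← rpow_mul hr.le, Nat.cast_ofNat, show 2*((1+s)/2) = 1+s by ring,
        rpow_add hr, rpow_one]
    have e2 : |(x-y)/sqrt (1-x^2)|^(-s) = |y-x|^(-s) * sqrt (1-x^2) ^ s := by
      rw [abs_div, abs_of_pos hr, div_rpow (abs_nonneg _) hr.le, abs_sub_comm x y, rpow_neg hr.le s,
        div_inv_eq_mul]
    have hD : 0 < 1 - 2*x*y + y^2 := by nlinarith [sq_nonneg (x-y)]
    have e3 : sqrt (1 - y^2 + ((x-y)/sqrt (1-x^2))^2) = (1-x*y)/sqrt (1-x^2) := by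
      rw [sqrt_eq_iff_mul_self_eq (by have : 0 < 1 - y^2 := by linarith
                                      positivity) (by positivity)]
      field_simp
      rw [hr2]; ring
    have e4 : GG y ((x-y)/sqrt (1-x^2)) = sqrt (1-x^2)^4/(1-x*y) := by
      unfold GG
      rw [e3]
      have a1 : (1-x*y)/sqrt (1-x^2) - y * ((x-y)/sqrt (1-x^2)) = (1-2*x*y+y^2)/sqrt (1-x^2) := by
        ring
      have a2 : 1 + ((x-y)/sqrt (1-x^2))^2 = (1-2*x*y+y^2)/sqrt (1-x^2)^2 := by
        field_simp
        rw [hr2]; ring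
      rw [a1, a2]
      field_simp
    simp only [smul_eq_mul]
    rw [e1, e2, e4, abs_of_pos (by positivity)]
    field_simp
  constructor
  · rw [← integrableOn_univ, ← him, integrableOn_image_iff_integrableOn_abs_deriv_smul measurableSet_Ioo hd hi,
      integrableOn_congr_fun heq measurableSet_Ioo]
  · rw [← setIntegral_univ (f := fun t : ℝ => |t|^(-s) * GG y t), ← him, integral_image_eq_integral_abs_deriv_smul measurableSet_Ioo hd hi,
      setIntegral_congr_fun measurableSet_Ioo heq]

noncomputable def MM (s : ℝ) : ℝ := π / cos (s * π / 2)

noncomputable def UU (s y : ℝ) : ℝ := ∫ x in Set.Ioo (-1:ℝ) 1, |y-x|^(-s) * (1-x^2)^((1+s)/2)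

theorem cos_pos_aux {s : ℝ} (hs0 : 0 < s) (hs1 : s < 1) : 0 < cos (s * π / 2) := by
  apply cos_pos_of_mem_Ioo
  constructor <;> nlinarith [pi_pos]

theorem MM_pos {s : ℝ} (hs0 : 0 < s) (hs1 : s < 1) : 0 < MM s :=
  div_pos pi_pos (cos_pos_aux hs0 hs1)

theorem MM_eq (s : ℝ) : Gamma ((1+s)/2) * Gamma ((1-s)/2) = MM s := by
  have := Gamma_mul_Gamma_one_sub ((1+s)/2)
  rw [show 1 - (1+s)/2 = (1-s)/2 by ring, show π * ((1+s)/2) = s*π/2 + π/2 by ring,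
    sin_add_pi_div_two] at this
  exact this

theorem G3 {s : ℝ} (hs0 : 0 < s) : Gamma ((3+s)/2) = (1+s)/2 * Gamma ((1+s)/2) := by
  rw [← Gamma_add_one (by positivity)]; congr 1; ring
theorem G5 {s : ℝ} (hs0 : 0 < s) : Gamma ((5+s)/2) = (3+s)/2 * ((1+s)/2 * Gamma ((1+s)/2)) := by
  rw [← G3 hs0, ← Gamma_add_one (by positivity)]; congr 1; ring
theorem G3m {s : ℝ} (hs1 : s < 1) : Gamma ((3-s)/2) = (1-s)/2 * Gamma ((1-s)/2) := by
  rw [← Gamma_add_one (by linarith)]; congr 1; ring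
theorem Gam3 : Gamma 3 = 2 := by
  rw [show (3:ℝ) = ((2:ℕ):ℝ) + 1 by norm_num, Gamma_nat_eq_factorial]; norm_num

theorem half1 {s : ℝ} (hs0 : 0 < s) (hs1 : s < 1) :
    IntegrableOn (fun t : ℝ => t ^ (-s) * (1+t^2) ^ (-3:ℝ)) (Set.Ioi 0) ∧
    ∫ t in Set.Ioi (0:ℝ), t ^ (-s) * (1+t^2) ^ (-3:ℝ) = MM s * (1+s)*(3+s)/16 := by
  have := beta_half (m := (1-s)/2) (n := (5+s)/2) (by linarith) (by linarith)
  rw [show 2*((1-s)/2) - 1 = -s by ring, show (1-s)/2+(5+s)/2 = 3 by ring, Gam3, G5 hs0] at this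
  refine ⟨this.1, this.2.trans ?_⟩
  rw [← MM_eq]; ring

theorem half2 {s : ℝ} (hs0 : 0 < s) (hs1 : s < 1) :
    IntegrableOn (fun t : ℝ => t ^ (2-s) * (1+t^2) ^ (-3:ℝ)) (Set.Ioi 0) ∧
    ∫ t in Set.Ioi (0:ℝ), t ^ (2-s) * (1+t^2) ^ (-3:ℝ) = MM s * (1+s)*(1-s)/16 := by
  have := beta_half (m := (3-s)/2) (n := (3+s)/2) (by linarith) (by linarith)
  rw [show 2*((3-s)/2) - 1 = 2-s by ring, show (3-s)/2+(3+s)/2 = 3 by ring, Gam3, G3 hs0, G3m hs1] at this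
  refine ⟨this.1, this.2.trans ?_⟩
  rw [← MM_eq]; ring

theorem sum_int {s : ℝ} (hs0 : 0 < s) (hs1 : s < 1) (y : ℝ) :
    ∫ t : ℝ, (|t|^(-s) * (2 * ((1-y^2) + (1+3*y^2) * t^2) / (1+t^2)^3)) =
      2 * (MM s * s * (1+s) / 2 * (1-y^2) + MM s * (1+s)*(1-s)/2) := by
  have h := integral_comp_abs (f := fun t : ℝ => t^(-s) * (2 * ((1-y^2) + (1+3*y^2) * t^2) / (1+t^2)^3))
  simp only [sq_abs] at h
  rw [h]
  congr 1
  have heq : Set.EqOn (fun t : ℝ => t^(-s) * (2 * ((1-y^2) + (1+3*y^2) * t^2) / (1+t^2)^3))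
    (fun t => (2*(1-y^2)) * (t ^ (-s) * (1+t^2) ^ (-3:ℝ)) + (2*(1+3*y^2)) * (t ^ (2-s) * (1+t^2) ^ (-3:ℝ)))
    (Set.Ioi 0) := by
    intro t ht
    have ht : 0 < t := ht
    have e1 : t ^ (2-s) = t^2 * t^(-s) := by
      rw [sub_eq_add_neg, rpow_add ht]; norm_cast
    have e2 : (1+t^2) ^ (-3:ℝ) = ((1+t^2)^3)⁻¹ := by
      rw [rpow_neg (by positivity)]; norm_cast
    simp only
    rw [e1, e2]; ring
  rw [setIntegral_congr_fun measurableSet_Ioi heq, integral_add ((half1 hs0 hs1).1.const_mul _)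
    ((half2 hs0 hs1).1.const_mul _), integral_const_mul, integral_const_mul, (half1 hs0 hs1).2,
    (half2 hs0 hs1).2]
  ring

theorem UU_inside {s y : ℝ} (hs0 : 0 < s) (hs1 : s < 1) (hy : |y| < 1) :
    IntegrableOn (fun x : ℝ => |y-x|^(-s) * (1-x^2)^((1+s)/2)) (Set.Ioo (-1) 1) ∧
    UU s y = MM s * s * (1+s) / 2 * (1-y^2) + MM s * (1+s)*(1-s)/2 := by
  have hc := inside_cov (s := s) hy
  have hS := sum_int hs0 hs1 y
  have hM := MM_pos hs0 hs1
  have hy2 : y^2 < 1 := by rw [← sq_abs]; nlinarith [abs_nonneg y]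
  have hSint : Integrable (fun t : ℝ => (|t|^(-s) * (2 * ((1-y^2) + (1+3*y^2) * t^2) / (1+t^2)^3))) := by
    apply Integrable.of_integral_ne_zero
    rw [hS]
    have h1 : 0 < 1 - y^2 := by linarith
    have h2 : 0 < 1 - s := by linarith
    positivity
  have hg : Integrable (fun t : ℝ => |t|^(-s) * GG y t) := by
    refine hSint.mono' ?_ (Filter.Eventually.of_forall fun t => ?_)
    · apply Measurable.aestronglyMeasurable
      unfold GG
      fun_prop
    · have h1 := GG_nonneg hy t
      have h2 := GG_nonneg hy (-t)
      have h3 : 0 ≤ |t|^(-s) := rpow_nonneg (abs_nonneg t) _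
      rw [norm_of_nonneg (by positivity), ← GG_sum hy]
      nlinarith
  refine ⟨hc.1.2 hg, ?_⟩
  unfold UU
  rw [hc.2]
  have hneg := integral_neg_eq_self (fun t : ℝ => |t|^(-s) * GG y t) volume
  have hadd := integral_add hg hg.comp_neg
  have : ∫ t : ℝ, (|t|^(-s) * GG y t + |-t|^(-s) * GG y (-t)) =
     2 * (MM s * s * (1+s) / 2 * (1-y^2) + MM s * (1+s)*(1-s)/2) := by
    rw [← hS]; congr 1; ext t; rw [abs_neg, ← mul_add, GG_sum hy]
  linarith

theorem w_split {s x : ℝ} (hx : x ∈ Set.Ioo (-1:ℝ) 1) :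
    (1-x^2)^((1+s)/2) = (1+x)^((1+s)/2) * (1-x)^((1+s)/2) := by
  rw [← mul_rpow (by linarith [hx.1]) (by linarith [hx.2])]; congr 1; ring

theorem UU_one {s : ℝ} (hs0 : 0 < s) (hs1 : s < 1) :
    IntegrableOn (fun x : ℝ => |1-x|^(-s) * (1-x^2)^((1+s)/2)) (Set.Ioo (-1) 1) ∧
    UU s 1 = MM s * (1+s)*(1-s)/2 := by
  have heq : Set.EqOn (fun x : ℝ => |1-x|^(-s) * (1-x^2)^((1+s)/2))
     (fun x => (1+x)^((3+s)/2-1) * (1-x)^((3-s)/2-1)) (Set.Ioo (-1) 1) := by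
    intro x hx
    have h1 : 0 < 1 - x := by linarith [hx.2]
    simp only
    rw [w_split hx, abs_of_pos h1, show (3-s)/2-1 = -s + (1+s)/2 by ring, rpow_add h1,
      show (3+s)/2-1 = (1+s)/2 by ring]
    ring
  have hb := beta_shift (m := (3+s)/2) (n := (3-s)/2) (by linarith) (by linarith)
  refine ⟨(integrableOn_congr_fun heq measurableSet_Ioo).2 hb.1, ?_⟩
  unfold UU
  rw [setIntegral_congr_fun measurableSet_Ioo heq, hb.2, show (3+s)/2 + (3-s)/2 = 3 by ring, Gam3,
    G3 hs0, G3m hs1, ← MM_eq]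
  norm_num
  ring

theorem VV_one {s : ℝ} (hs0 : 0 < s) (hs1 : s < 1) :
    IntegrableOn (fun x : ℝ => (1-x)^(-s-1) * (1-x^2)^((1+s)/2)) (Set.Ioo (-1) 1) ∧
    ∫ x in Set.Ioo (-1:ℝ) 1, (1-x)^(-s-1) * (1-x^2)^((1+s)/2) = MM s * (1+s) := by
  have heq : Set.EqOn (fun x : ℝ => (1-x)^(-s-1) * (1-x^2)^((1+s)/2))
     (fun x => (1+x)^((3+s)/2-1) * (1-x)^((1-s)/2-1)) (Set.Ioo (-1) 1) := by
    intro x hx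
    have h1 : 0 < 1 - x := by linarith [hx.2]
    simp only
    rw [w_split hx, show (1-s)/2-1 = (-s-1) + (1+s)/2 by ring, rpow_add h1,
      show (3+s)/2-1 = (1+s)/2 by ring]
    ring
  have hb := beta_shift (m := (3+s)/2) (n := (1-s)/2) (by linarith) (by linarith)
  refine ⟨(integrableOn_congr_fun heq measurableSet_Ioo).2 hb.1, ?_⟩
  rw [setIntegral_congr_fun measurableSet_Ioo heq, hb.2, show (3+s)/2 + (1-s)/2 = 2 by ring,
    G3 hs0, ← MM_eq, Gamma_two]
  norm_num
  ring

theorem tangent {s d h : ℝ} (hs0 : 0 < s) (hs1 : s < 1) (hd : 0 < d) (hh : 0 < h) :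
    d^(-s) - s*h*d^(-s-1) ≤ (d+h)^(-s) := by
  have e : d + h = d * (1 + h/d) := by field_simp
  have h0 : 0 < h/d := by positivity
  have h1 := rpow_one_add_le_one_add_mul_self (s := h/d) (p := s) (by linarith) hs0.le hs1.le
  have h2 : 1 - s*(h/d) ≤ (1+h/d)^(-s) := by
    have hp : 0 < (1+h/d)^s := by positivity
    rw [rpow_neg (by positivity), ← one_div, le_div_iff₀ hp]
    have hse : 0 < s * (h/d) := by positivity
    rcases le_total (s * (h/d)) 1 with hc | hc
    · nlinarith
    · nlinarith
  rw [e, mul_rpow hd.le (by positivity), show -s-1 = -s + -1 by ring, rpow_add hd, rpow_neg_one]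
  have hp : 0 < d^(-s) := by positivity
  calc d^(-s) - s*h*(d^(-s)*d⁻¹) = d^(-s) * (1 - s*(h/d)) := by ring
    _ ≤ _ := by gcongr

theorem UU_out {s y : ℝ} (hs0 : 0 < s) (hs1 : s < 1) (hy : 1 < y) :
    IntegrableOn (fun x : ℝ => |y-x|^(-s) * (1-x^2)^((1+s)/2)) (Set.Ioo (-1) 1) ∧
    MM s * s * (1+s) / 2 * (1-y^2) + MM s * (1+s)*(1-s)/2 < UU s y := by
  have h1 := UU_one hs0 hs1
  have h2 := VV_one hs0 hs1
  have hint : IntegrableOn (fun x : ℝ => |y-x|^(-s) * (1-x^2)^((1+s)/2)) (Set.Ioo (-1) 1) := by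
    refine Integrable.mono' h1.1 ?_ ?_
    · apply Measurable.aestronglyMeasurable
      fun_prop
    · refine (ae_restrict_iff' measurableSet_Ioo).2 (Filter.Eventually.of_forall fun x hx => ?_)
      have hx1 : 0 < 1 - x := by linarith [hx.2]
      have hx2 : 0 < 1 - x^2 := by nlinarith [hx.1]
      rw [norm_of_nonneg (by positivity), abs_of_pos hx1, abs_of_pos (by linarith)]
      gcongr ?_ * _
      exact rpow_le_rpow_of_nonpos hx1 (by linarith) (by linarith)
  refine ⟨hint, ?_⟩
  have hle : ∫ x in Set.Ioo (-1:ℝ) 1, (|1-x|^(-s) * (1-x^2)^((1+s)/2) -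
      s*(y-1) * ((1-x)^(-s-1) * (1-x^2)^((1+s)/2))) ≤ UU s y := by
    unfold UU
    refine setIntegral_mono_on (h1.1.sub (h2.1.const_mul _)) hint measurableSet_Ioo ?_
    intro x hx
    have hx1 : 0 < 1 - x := by linarith [hx.2]
    have hx2 : 0 < 1 - x^2 := by nlinarith [hx.1]
    have := tangent hs0 hs1 hx1 (sub_pos.2 hy)
    rw [show 1 - x + (y-1) = y - x by ring] at this
    rw [abs_of_pos hx1, abs_of_pos (by linarith : 0 < y - x)]
    have hw : 0 < (1-x^2)^((1+s)/2) := by positivity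
    nlinarith
  rw [integral_sub h1.1 (h2.1.const_mul _), integral_const_mul, h2.2] at hle
  have h3 := h1.2
  unfold UU at h3
  rw [h3] at hle
  refine lt_of_lt_of_le ?_ hle
  have hM := MM_pos hs0 hs1
  have : 0 < MM s * s * (1+s) * (y-1)^2 := by
    have : 0 < y - 1 := by linarith
    positivity
  nlinarith

theorem UU_neg (s y : ℝ) : 
    (IntegrableOn (fun x : ℝ => |-y-x|^(-s) * (1-x^2)^((1+s)/2)) (Set.Ioo (-1) 1) ↔
    IntegrableOn (fun x : ℝ => |y-x|^(-s) * (1-x^2)^((1+s)/2)) (Set.Ioo (-1) 1)) ∧ UU s (-y) = UU s y := by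
  have him : (fun p : ℝ => -p) '' Set.Ioo (-1) 1 = Set.Ioo (-1) 1 := by
    simp
  have hd : ∀ p ∈ Set.Ioo (-1:ℝ) 1, HasDerivWithinAt (fun p : ℝ => -p) (-1) (Set.Ioo (-1) 1) p := by
    intro p _
    exact (hasDerivAt_neg p).hasDerivWithinAt
  have hi : Set.InjOn (fun p : ℝ => -p) (Set.Ioo (-1) 1) := neg_injective.injOn
  have heq : (fun p : ℝ => |(-1:ℝ)| • (|-y-(-p)|^(-s) * (1-(-p)^2)^((1+s)/2))) =
     (fun x : ℝ => |y-x|^(-s) * (1-x^2)^((1+s)/2)) := by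
    ext p
    rw [abs_neg, abs_one, one_smul, neg_sq, show -y - -p = -(y-p) by ring, abs_neg]
  constructor
  · conv_lhs => rw [← him]
    rw [integrableOn_image_iff_integrableOn_abs_deriv_smul measurableSet_Ioo hd hi, heq]
  · unfold UU
    conv_lhs => rw [← him]
    rw [integral_image_eq_integral_abs_deriv_smul measurableSet_Ioo hd hi, heq]

theorem UU_all {s : ℝ} (hs0 : 0 < s) (hs1 : s < 1) (y : ℝ) :
    IntegrableOn (fun x : ℝ => |y-x|^(-s) * (1-x^2)^((1+s)/2)) (Set.Ioo (-1) 1) ∧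
    (|y| ≤ 1 → UU s y = MM s * s * (1+s) / 2 * (1-y^2) + MM s * (1+s)*(1-s)/2) ∧
    (1 < |y| → MM s * s * (1+s) / 2 * (1-y^2) + MM s * (1+s)*(1-s)/2 < UU s y) := by
  have key : ∀ y : ℝ, 0 ≤ y → IntegrableOn (fun x : ℝ => |y-x|^(-s) * (1-x^2)^((1+s)/2)) (Set.Ioo (-1) 1) ∧
    (|y| ≤ 1 → UU s y = MM s * s * (1+s) / 2 * (1-y^2) + MM s * (1+s)*(1-s)/2) ∧
    (1 < |y| → MM s * s * (1+s) / 2 * (1-y^2) + MM s * (1+s)*(1-s)/2 < UU s y) := by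
    intro y hy0
    rcases lt_trichotomy y 1 with h | rfl | h
    · have hy : |y| < 1 := by rwa [abs_of_nonneg hy0]
      have := UU_inside hs0 hs1 hy
      exact ⟨this.1, fun _ => this.2, fun h => absurd h hy.not_gt⟩
    · have := UU_one hs0 hs1
      refine ⟨this.1, fun _ => ?_, fun h => ?_⟩
      · rw [this.2]; ring
      · simp at h
    · have := UU_out hs0 hs1 h
      have hy : 1 < |y| := by rwa [abs_of_nonneg hy0]
      exact ⟨this.1, fun h => absurd h hy.not_ge, fun _ => this.2⟩
  rcases le_total 0 y with h | h
  · exact key y h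
  · have := key (-y) (by linarith)
    rw [(UU_neg s y).1, (UU_neg s y).2, abs_neg, neg_sq] at this
    exact this

theorem w_cont {s : ℝ} (hs0 : 0 < s) : Continuous (fun x : ℝ => (1-x^2)^((1+s)/2)) :=
  Continuous.rpow_const (by fun_prop) (fun _ => Or.inr (by positivity))

theorem odd_zero (s : ℝ) : ∫ x in Set.Ioo (-1:ℝ) 1, x * (1-x^2)^((1+s)/2) = 0 := by
  have him : (fun p : ℝ => -p) '' Set.Ioo (-1) 1 = Set.Ioo (-1) 1 := by
    simp
  have hd : ∀ p ∈ Set.Ioo (-1:ℝ) 1, HasDerivWithinAt (fun p : ℝ => -p) (-1) (Set.Ioo (-1) 1) p := by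
    intro p _
    exact (hasDerivAt_neg p).hasDerivWithinAt
  have hi : Set.InjOn (fun p : ℝ => -p) (Set.Ioo (-1) 1) := neg_injective.injOn
  have h := integral_image_eq_integral_abs_deriv_smul measurableSet_Ioo hd hi
    (fun x : ℝ => x * (1-x^2)^((1+s)/2))
  have heq : (fun p : ℝ => |(-1:ℝ)| • ((-p) * (1-(-p)^2)^((1+s)/2))) =
     (fun x : ℝ => - (x * (1-x^2)^((1+s)/2))) := by
    ext p
    rw [abs_neg, abs_one, one_smul, neg_sq]; ring
  rw [him, heq, integral_neg] at h
  linarith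

theorem quad_int {s : ℝ} (hs0 : 0 < s) (y : ℝ) :
    IntegrableOn (fun x : ℝ => |y-x|^2 * (1-x^2)^((1+s)/2)) (Set.Ioo (-1) 1) ∧
    ∫ x in Set.Ioo (-1:ℝ) 1, |y-x|^2 * (1-x^2)^((1+s)/2) =
      y^2 * (Gamma (1/2) * Gamma ((3+s)/2) / Gamma (1/2+(3+s)/2)) +
      ∫ x in Set.Ioo (-1:ℝ) 1, x^2 * (1-x^2)^((1+s)/2) := by
  have hw := w_cont hs0
  have hI : ∀ f : ℝ → ℝ, Continuous f → IntegrableOn f (Set.Ioo (-1) 1) := fun f hf =>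
    hf.integrableOn_Icc.mono_set Set.Ioo_subset_Icc_self
  have hb := beta_sq (n := (3+s)/2) (by positivity)
  rw [show (3+s)/2 - 1 = (1+s)/2 by ring] at hb
  refine ⟨hI _ (by fun_prop), ?_⟩
  have e : (fun x : ℝ => |y-x|^2 * (1-x^2)^((1+s)/2)) =
    fun x => (y^2 * (1-x^2)^((1+s)/2) - 2*y*(x * (1-x^2)^((1+s)/2))) + x^2 * (1-x^2)^((1+s)/2) := by
    ext x; rw [sq_abs]; ring
  rw [e, integral_add (hI _ (by fun_prop)) (hI _ (by fun_prop)),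
    integral_sub (hI _ (by fun_prop)) (hI _ (by fun_prop)), integral_const_mul, integral_const_mul,
    odd_zero, hb]
  ring

theorem rho1_euler_lagrange (s : ℝ) (hs0 : 0 < s) (hs1 : s < 1) :
    ∀ (Cs R₁ C₁ : ℝ) (ρ₁ P : ℝ → ℝ),
      Cs = 2 * Real.cos (s * π / 2) / (s * (s + 1) * π) →
      R₁ = (Cs * (Real.Gamma (1/2) * Real.Gamma ((3 + s)/2) /
            Real.Gamma (1/2 + (3 + s)/2))) ^ (-(1 / (s + 2))) →
      C₁ = Cs →
      (∀ x, ρ₁ x = C₁ * (max (R₁ ^ 2 - x ^ 2) 0) ^ ((1 + s) / 2)) →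
      (∀ y, P y = ∫ x, (|y - x| ^ (-s) + |y - x| ^ 2) * ρ₁ x) →
      ∃ K : ℝ, (∀ y : ℝ, |y| ≤ R₁ → P y = K) ∧ (∀ y : ℝ, R₁ < |y| → K < P y) := by
  intro Cs R C₁ ρ P hCs hR hC hρ hP
  subst hC
  have hcos := cos_pos_aux hs0 hs1
  have hCpos : 0 < C₁ := by rw [hCs]; positivity
  have hCM : C₁ * (MM s * s * (1+s) / 2) = 1 := by
    rw [hCs, MM]; field_simp; ring
  have hBpos : 0 < Gamma (1/2) * Gamma ((3+s)/2) / Gamma (1/2+(3+s)/2) := by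
    have h1 := Gamma_pos_of_pos (s := 1/2) (by norm_num)
    have h2 := Gamma_pos_of_pos (s := (3+s)/2) (by positivity)
    have h3 := Gamma_pos_of_pos (s := 1/2+(3+s)/2) (by positivity)
    positivity
  have hquad := quad_int hs0
  generalize hm2 : ∫ x in Set.Ioo (-1:ℝ) 1, x^2 * (1-x^2)^((1+s)/2) = m2 at hquad
  generalize hB : Gamma (1/2) * Gamma ((3+s)/2) / Gamma (1/2+(3+s)/2) = B at *
  have hCB : 0 < C₁ * B := by positivity
  have hRpos : 0 < R := by rw [hR]; positivity
  have hRpow : R ^ (s+2) * (C₁ * B) = 1 := by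
    rw [hR, ← rpow_mul hCB.le, show -(1/(s+2)) * (s+2) = -1 by field_simp, rpow_neg_one]
    field_simp
  have hPform : ∀ η : ℝ, P (R*η) = C₁ * R^2 * (UU s η + R^(s+2) * (η^2 * B + m2)) := by
    intro η
    have h1 := Measure.integral_comp_mul_left
      (fun x => (|R*η - x| ^ (-s) + |R*η - x| ^ 2) * ρ x) R
    rw [abs_of_pos (inv_pos.2 hRpos), smul_eq_mul, ← hP] at h1
    have h2 : P (R*η) = R * ∫ x, (|R*η - R*x| ^ (-s) + |R*η - R*x| ^ 2) * ρ (R*x) := by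
      rw [h1]; field_simp
    have h3 : ∀ x ∉ Set.Ioo (-1:ℝ) 1, (|R*η - R*x| ^ (-s) + |R*η - R*x| ^ 2) * ρ (R*x) = 0 := by
      intro x hx
      have : 1 ≤ x^2 := by
        by_contra hc
        exact hx (abs_lt.1 ((sq_lt_one_iff_abs_lt_one x).1 (not_le.1 hc)))
      have : R^2 - (R*x)^2 ≤ 0 := by nlinarith [sq_nonneg R]
      rw [hρ, max_eq_right this, zero_rpow (by positivity)]; ring
    have h4 : Set.EqOn (fun x => (|R*η - R*x| ^ (-s) + |R*η - R*x| ^ 2) * ρ (R*x))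
      (fun x => C₁ * R * (|η-x|^(-s) * (1-x^2)^((1+s)/2) + R^(s+2) * (|η-x|^2 * (1-x^2)^((1+s)/2))))
      (Set.Ioo (-1) 1) := by
      intro x hx
      have hx2 : 0 < 1 - x^2 := by nlinarith [hx.1, hx.2]
      have e1 : R^2 - (R*x)^2 = R^2 * (1-x^2) := by ring
      have e2 : (R^2) ^ ((1+s)/2) = R * R^s := by
        rw [← rpow_natCast, ← rpow_mul hRpos.le, Nat.cast_ofNat, show 2*((1+s)/2) = 1+s by ring,
          rpow_add hRpos, rpow_one]
      have e3 : R^(s+2) = R^s * R^2 := by rw [rpow_add hRpos]; norm_cast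
      simp only
      rw [hρ, e1, max_eq_left (by positivity), mul_rpow (by positivity) hx2.le, e2, e3, ← mul_sub,
        abs_mul, abs_of_pos hRpos, mul_rpow hRpos.le (abs_nonneg _), rpow_neg hRpos.le]
      have : R^s ≠ 0 := by positivity
      field_simp
    rw [h2, ← setIntegral_eq_integral_of_forall_compl_eq_zero h3,
      setIntegral_congr_fun measurableSet_Ioo h4, integral_const_mul,
      integral_add (UU_all hs0 hs1 η).1 ((hquad η).1.const_mul _), integral_const_mul, (hquad η).2,
      ← UU]
    ring
  have hfin : ∀ η : ℝ, P (R*η) = C₁ * R^2 * (UU s η - MM s * s * (1+s) / 2 * (1-η^2)) +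
      R^2 * (1 + C₁ * R^(s+2) * m2) := by
    intro η
    rw [hPform]
    linear_combination R^2 * η^2 * hRpow + R^2 * (1-η^2) * hCM
  have hsc : ∀ y : ℝ, R * (y/R) = y := fun y => by field_simp
  have habs : ∀ y : ℝ, |y/R| = |y|/R := fun y => by rw [abs_div, abs_of_pos hRpos]
  refine ⟨C₁ * R^2 * (MM s * (1+s)*(1-s)/2) + R^2 * (1 + C₁ * R^(s+2) * m2), ?_, ?_⟩
  · intro y hy
    have := (UU_all hs0 hs1 (y/R)).2.1 (by rw [habs, div_le_one hRpos]; exact hy)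
    rw [← hsc y, hfin, this]; ring
  · intro y hy
    have := (UU_all hs0 hs1 (y/R)).2.2 (by rw [habs, one_lt_div hRpos]; exact hy)
    rw [← hsc y, hfin]
    have hpos : 0 < C₁ * R^2 := by positivity
    gcongr
    linarith
end
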